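/- Let E = EuclideanSpace ℝ (Fin n), let J : E → ℝ be twice continuously differentiable at s*, let c > 0 and s₀ ∈ E, and suppose s* is a local minimum of the function s ↦ J(s) + (c/2) * ‖s − s₀‖². Then for every v ∈ E, iteratedFDeriv ℝ 2 J s* ![v, v] ≥ −c * ‖v‖². -/

import Mathlib

/-!
Along every line through a local minimum of the penalized objective the second derivative is
nonnegative. It is the sum of the Hessian form of `J` and that of the penalty, and the Hessian of
the penalty is `c` times the inner product.
-/

open Filter Topology

/-- If the second derivative were negative, the second derivative test would make `a` a local
maximum as well, so `g` would be constant near `a` and its second derivative would vanish. -/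
theorem deriv_deriv_nonneg_of_isLocalMin {g : ℝ → ℝ} {a : ℝ} (hmin : IsLocalMin g a)
    (hg : ContinuousAt g a) : 0 ≤ deriv (deriv g) a := by
  by_contra! hneg
  have hmax : IsLocalMax g a := isLocalMax_of_deriv_deriv_neg hneg hmin.deriv_eq_zero hg
  have hconst : g =ᶠ[𝓝 a] fun _ ↦ g a := by
    filter_upwards [hmin, hmax] with t hge hle using le_antisymm hle hge
  have hzero : deriv (deriv g) a = 0 := by
    rw [hconst.deriv.deriv_eq, deriv_const', deriv_const]
  exact hneg.ne hzero

section ContDiffAt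

variable {𝕜 E F : Type*} [NontriviallyNormedField 𝕜] [NormedAddCommGroup E] [NormedSpace 𝕜 E]
  [NormedAddCommGroup F] [NormedSpace 𝕜 F] {f : E → F} {a : E}

theorem eventually_hasFDerivAt_of_contDiffAt (hf : ContDiffAt 𝕜 1 f a) :
    ∀ᶠ x in 𝓝 a, HasFDerivAt f (fderiv 𝕜 f x) x :=
  (hf.eventually (by simp)).mono fun _ hx ↦ (hx.differentiableAt one_ne_zero).hasFDerivAt

theorem hasFDerivAt_fderiv_of_contDiffAt (hf : ContDiffAt 𝕜 2 f a) :
    HasFDerivAt (fderiv 𝕜 f) (fderiv 𝕜 (fderiv 𝕜 f) a) a :=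
  ((hf.fderiv_right (m := 1) one_add_one_eq_two.le).differentiableAt one_ne_zero).hasFDerivAt

end ContDiffAt

section NormedSpace

variable {E : Type*} [NormedAddCommGroup E] [NormedSpace ℝ E]
  {f d : E → ℝ} {f' d' : E → E →L[ℝ] ℝ} {f'' d'' : E →L[ℝ] E →L[ℝ] ℝ} {a : E}

theorem second_derivative_nonneg_of_isLocalMin (hmin : IsLocalMin f a)
    (hf : ∀ᶠ x in 𝓝 a, HasFDerivAt f (f' x) x) (hf' : HasFDerivAt f' f'' a) (v : E) :
    0 ≤ f'' v v := by
  let line : ℝ → E := fun t ↦ a + t • v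
  have hline_deriv (t : ℝ) : HasDerivAt line v t := by
    simpa [line] using ((hasDerivAt_id t).smul_const v).const_add a
  have hline_zero : line 0 = a := by simp [line]
  have hline : Tendsto line (𝓝 0) (𝓝 a) := hline_zero ▸ (hline_deriv 0).continuousAt.tendsto
  have hmin_line : IsLocalMin (f ∘ line) 0 := by
    rw [← hline_zero] at hmin
    exact IsMinFilter.comp_tendsto hmin (hline_deriv 0).continuousAt
  have hfirst : ∀ᶠ t in 𝓝 0, HasDerivAt (f ∘ line) (f' (line t) v) t :=
    (hline.eventually hf).mono fun t ht ↦ ht.comp_hasDerivAt t (hline_deriv t)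
  have hsecond : HasDerivAt (fun t ↦ f' (line t) v) (f'' v v) 0 := by
    rw [← hline_zero] at hf'
    simpa using (hf'.comp_hasDerivAt 0 (hline_deriv 0)).clm_apply (hasDerivAt_const 0 v)
  calc
    0 ≤ deriv (deriv (f ∘ line)) 0 :=
      deriv_deriv_nonneg_of_isLocalMin hmin_line hfirst.self_of_nhds.continuousAt
    _ = deriv (fun t ↦ f' (line t) v) 0 :=
      EventuallyEq.deriv_eq (hfirst.mono fun _ ht ↦ ht.deriv)
    _ = f'' v v := hsecond.deriv

theorem neg_second_derivative_le_of_isLocalMin_add (hmin : IsLocalMin (fun x ↦ f x + d x) a)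
    (hf : ∀ᶠ x in 𝓝 a, HasFDerivAt f (f' x) x) (hf' : HasFDerivAt f' f'' a)
    (hd : ∀ᶠ x in 𝓝 a, HasFDerivAt d (d' x) x) (hd' : HasFDerivAt d' d'' a) (v : E) :
    -d'' v v ≤ f'' v v := by
  have hsum : 0 ≤ (f'' + d'') v v :=
    second_derivative_nonneg_of_isLocalMin hmin
      ((hf.and hd).mono fun _ hx ↦ hx.1.add hx.2) (hf'.add hd') v
  exact neg_le_iff_add_nonneg.mpr hsum

end NormedSpace

section InnerProductSpace

variable {E : Type*} [NormedAddCommGroup E] [InnerProductSpace ℝ E]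

theorem hasFDerivAt_half_mul_norm_sub_sq (c : ℝ) (s₀ s : E) :
    HasFDerivAt (fun x ↦ c / 2 * ‖x - s₀‖ ^ 2) (c • innerSL ℝ (s - s₀)) s := by
  refine (((hasFDerivAt_id s).sub_const s₀).norm_sq.const_mul (c / 2)).congr_fderiv ?_
  rw [ContinuousLinearMap.comp_id, id_eq]
  module

theorem hasFDerivAt_smul_innerSL_sub (c : ℝ) (s₀ s : E) :
    HasFDerivAt (fun x ↦ c • innerSL ℝ (x - s₀)) (c • innerSL ℝ : E →L[ℝ] E →L[ℝ] ℝ) s :=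
  ((innerSL ℝ).hasFDerivAt.comp s ((hasFDerivAt_id s).sub_const s₀)).const_smul c

theorem curvature_lower_bound_quadratic_penalty_general
    {J : E → ℝ} {J' : E → E →L[ℝ] ℝ} {J'' : E →L[ℝ] E →L[ℝ] ℝ} {sstar s₀ : E} {c : ℝ}
    (hJ : ∀ᶠ s in 𝓝 sstar, HasFDerivAt J (J' s) s) (hJ' : HasFDerivAt J' J'' sstar)
    (hmin : IsLocalMin (fun s ↦ J s + c / 2 * ‖s - s₀‖ ^ 2) sstar) (v : E) :
    -c * ‖v‖ ^ 2 ≤ J'' v v := by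
  calc
    -c * ‖v‖ ^ 2 = -(c • innerSL ℝ : E →L[ℝ] E →L[ℝ] ℝ) v v := by simp
    _ ≤ J'' v v :=
      neg_second_derivative_le_of_isLocalMin_add hmin hJ hJ'
        (.of_forall (hasFDerivAt_half_mul_norm_sub_sq c s₀))
        (hasFDerivAt_smul_innerSL_sub c s₀ sstar) v

end InnerProductSpace

/-- Proposition 1 instantiated with the standard distance function
`D(s) = (c/2)‖s - s₀‖²`: at a local minimum `s*` of `s ↦ J s + (c/2)‖s - s₀‖²`,
the Hessian quadratic form of `J` is bounded below by `-c‖v‖²`. -/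
theorem curvature_lower_bound_quadratic_penalty
    {n : ℕ} (J : EuclideanSpace ℝ (Fin n) → ℝ)
    (sstar s₀ : EuclideanSpace ℝ (Fin n)) (c : ℝ) (hc : c > 0)
    (hJ : ContDiffAt ℝ 2 J sstar)
    (hmin : IsLocalMin (fun s => J s + (c / 2) * ‖s - s₀‖ ^ 2) sstar) :
    ∀ v : EuclideanSpace ℝ (Fin n),
      iteratedFDeriv ℝ 2 J sstar ![v, v] ≥ -c * ‖v‖ ^ 2 := by
  intro v
  rw [iteratedFDeriv_two_apply]
  exact curvature_lower_bound_quadratic_penalty_general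
    (eventually_hasFDerivAt_of_contDiffAt (hJ.of_le one_le_two))
    (hasFDerivAt_fderiv_of_contDiffAt hJ) hmin v
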